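/- Let ξ be a real irrational number and let α, β be real numbers with 0 < α < 1, β > 1 and μ(ξ) < 1 − (log β)/(log α). Then there exist integer sequences (u_n)_{n≥1} and (v_n)_{n≥1} such that lim_{n→∞} |u_{n+1} ξ − v_{n+1}|/|u_n ξ − v_n| = α, lim_{n→∞} |u_n ξ − v_n|^{1/n} = α, lim_{n→∞} u_{n+1}/u_n = β, and lim_{n→∞} |u_n|^{1/n} = β. -/

import Mathlib

/-!
The pairs `(u, uξ - v)` with `u, v` integers form a lattice of covolume one in the plane, and it
suffices to find lattice points at distance `o(βⁿ)` horizontally and `o(αⁿ)` vertically from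
`(βⁿ, αⁿ)`.

The hypothesis on the irrationality exponent gives `κ > 0` with `α ^ (-κ) < β` and
`|qξ - p| ≥ c q ^ (-κ)` for all `q ≥ 1` (`exists_lower_bound`). Dirichlet's theorem at height `T`
gives a reduced fraction `p/q` with `q ≤ T` and `|qξ - p| ≤ 1/T`, hence `q ≥ (cT) ^ (1/κ)`.
Completing `(q, qξ - p)` by Bézout to a basis of the lattice whose second vector has abscissa in
`[0, q)`, both basis vectors have ordinate `O(1/q)`, and rounding coordinates in this basis
approximates any point of the plane within `2T` horizontally and `3 (cT) ^ (-1/κ)` vertically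
(`exists_lattice_point`). Taking `T = γⁿ` with `α ^ (-κ) < γ < β` makes both errors negligible.
-/


open Filter Topology

/-- The irrationality exponent of a real number, as an extended real:
the infimum of all real `μ` such that `|ξ - p/q| > 1/q^μ` for all integers `p, q`
with `q` sufficiently large (`⊤` if no such real `μ` exists). -/
noncomputable def irrationalityExponent (ξ : ℝ) : EReal :=
  sInf {x : EReal | ∃ μ : ℝ, x = (μ : EReal) ∧
    ∀ᶠ q : ℕ in atTop, ∀ p : ℤ, |ξ - (p : ℝ) / (q : ℝ)| > 1 / (q : ℝ) ^ μ}

theorem exists_lower_bound (ξ : ℝ) (hξ : Irrational ξ) (ν : ℝ) (hν : 0 < ν)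
    (hμ : irrationalityExponent ξ < ((1 + ν : ℝ) : EReal)) :
    ∃ κ c : ℝ, 0 < κ ∧ κ < ν ∧ 0 < c ∧
      ∀ q : ℕ, 0 < q → ∀ p : ℤ, c * (q : ℝ) ^ (-κ) ≤ |(q : ℝ) * ξ - p| := by
  obtain ⟨x, ⟨μ, rfl, hev⟩, hlt⟩ := sInf_lt_iff.mp hμ
  have hμν : μ < 1 + ν := by exact_mod_cast hlt
  obtain ⟨Q, hQ⟩ := eventually_atTop.mp hev
  set κ := max (μ - 1) (ν / 2) with hκ
  have hκ0 : 0 < κ := lt_of_lt_of_le (by linarith) (le_max_right _ _)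
  -- The finitely many `q` below the threshold are handled by the constant `c`.
  obtain ⟨c, hc0, hc⟩ : ∃ c : ℝ, 0 < c ∧ ∀ q ∈ Finset.range Q, 0 < q →
      c ≤ |(q : ℝ) * ξ - round ((q : ℝ) * ξ)| := by
    have key : ∀ s : Finset ℕ, ∃ c : ℝ, 0 < c ∧ ∀ q ∈ s, 0 < q →
        c ≤ |(q : ℝ) * ξ - round ((q : ℝ) * ξ)| := by
      intro s
      induction s using Finset.induction_on with
      | empty => exact ⟨1, one_pos, by simp⟩
      | insert a s _ ih =>
        obtain ⟨c, hc0, hc⟩ := ih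
        by_cases ha : 0 < a
        · refine ⟨min c |(a : ℝ) * ξ - round ((a : ℝ) * ξ)|, lt_min hc0 ?_, ?_⟩
          · rw [abs_pos, sub_ne_zero]
            exact (hξ.natCast_mul ha.ne').ne_int _
          · intro q hq hq0
            rcases Finset.mem_insert.mp hq with rfl | hq
            · exact min_le_right _ _
            · exact (min_le_left _ _).trans (hc q hq hq0)
        · refine ⟨c, hc0, fun q hq hq0 => ?_⟩
          rcases Finset.mem_insert.mp hq with rfl | hq
          · exact absurd hq0 ha
          · exact hc q hq hq0
    exact key _
  refine ⟨κ, min c 1, hκ0, max_lt (by linarith) (by linarith), lt_min hc0 one_pos, ?_⟩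
  intro q hq p
  have hq1 : (1 : ℝ) ≤ q := by exact_mod_cast hq
  have hq0 : (0 : ℝ) < q := by linarith
  have hpow0 : 0 < (q : ℝ) ^ (-κ) := by positivity
  by_cases hqQ : q < Q
  · have h1 : (q : ℝ) ^ (-κ) ≤ 1 := Real.rpow_le_one_of_one_le_of_nonpos hq1 (by linarith)
    calc min c 1 * (q : ℝ) ^ (-κ) ≤ c * 1 :=
          mul_le_mul (min_le_left _ _) h1 hpow0.le hc0.le
      _ ≤ _ := by
          rw [mul_one]
          exact (hc q (Finset.mem_range.mpr hqQ) hq).trans (round_le _ _)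
  · have h1 := hQ q (not_lt.mp hqQ) p
    have h2 : |(q : ℝ) * ξ - p| = q * |ξ - p / q| := by
      rw [← abs_of_pos hq0, ← abs_mul, abs_of_pos hq0]
      congr 1
      field_simp
    calc min c 1 * (q : ℝ) ^ (-κ) ≤ 1 * (q : ℝ) ^ (-κ) := by gcongr; exact min_le_right _ _
      _ ≤ (q : ℝ) ^ (1 - μ) := by
          rw [one_mul]
          apply Real.rpow_le_rpow_of_exponent_le hq1
          linarith [le_max_left (μ - 1) (ν / 2)]
      _ = q * (1 / (q : ℝ) ^ μ) := by
          rw [Real.rpow_sub hq0, Real.rpow_one]; ring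
      _ ≤ q * |ξ - p / q| := by gcongr
      _ = _ := h2.symm

/-- Rounding a point of the plane in a basis of the lattice `{(u, uξ - v)}` adapted to a
Dirichlet approximation of height `T`. -/
theorem exists_lattice_point (ξ κ c : ℝ) (hκ : 0 < κ) (hc : 0 < c)
    (h : ∀ q : ℕ, 0 < q → ∀ p : ℤ, c * (q : ℝ) ^ (-κ) ≤ |(q : ℝ) * ξ - p|)
    (T X Y : ℝ) (hT : 1 ≤ T) :
    ∃ u v : ℤ, |(u : ℝ) - X| ≤ 2 * T ∧ |(u : ℝ) * ξ - v - Y| ≤ 3 * (c * T) ^ (-(1 / κ)) := by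
  have hT0 : 0 < T := by linarith
  have hN : 0 < ⌊T⌋₊ := Nat.floor_pos.mpr hT
  obtain ⟨a, ha1, ha2⟩ := Real.exists_rat_abs_sub_le_and_den_le ξ hN
  have hTN : T < (⌊T⌋₊ : ℝ) + 1 := Nat.lt_floor_add_one T
  have hq0 : (0 : ℝ) < a.den := by exact_mod_cast a.pos
  have hqT : (a.den : ℝ) ≤ T :=
    (show (a.den : ℝ) ≤ ⌊T⌋₊ by exact_mod_cast ha2).trans (Nat.floor_le hT0.le)
  set q : ℝ := (a.den : ℝ) with hq
  set e : ℝ := q * ξ - a.num with he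
  have heT : |e| ≤ 1 / T := by
    have h1 : e = q * (ξ - a) := by
      have : (a : ℝ) = a.num / q := Rat.cast_def a
      rw [this, he]; field_simp
    rw [h1, abs_mul, abs_of_pos hq0]
    calc q * |ξ - a| ≤ q * (1 / ((⌊T⌋₊ + 1) * q)) := by gcongr
      _ = 1 / (⌊T⌋₊ + 1) := by field_simp
      _ ≤ 1 / T := by gcongr
  have hqlow : 1 / q ≤ (c * T) ^ (-(1 / κ)) := by
    have h1 : c * q ^ (-κ) ≤ 1 / T := (h a.den a.pos a.num).trans heT
    have h2 : c * T ≤ q ^ κ := by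
      rw [Real.rpow_neg hq0.le, le_div_iff₀ hT0] at h1
      have : 0 < q ^ κ := by positivity
      calc c * T = (c * (q ^ κ)⁻¹ * T) * q ^ κ := by field_simp
        _ ≤ 1 * q ^ κ := by gcongr
        _ = _ := one_mul _
    have h3 : (c * T) ^ (1 / κ) ≤ q := by
      calc (c * T) ^ (1 / κ) ≤ (q ^ κ) ^ (1 / κ) := by gcongr
        _ = q := by rw [← Real.rpow_mul hq0.le, mul_one_div_cancel hκ.ne', Real.rpow_one]
    rw [Real.rpow_neg (by positivity), ← one_div]
    exact one_div_le_one_div_of_le (by positivity) h3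
  -- A second basis vector `(r, rξ - s)`, with `r` reduced modulo the denominator.
  obtain ⟨r, s, hr0, hrq, hdet⟩ : ∃ r s : ℤ, 0 ≤ r ∧ r < a.den ∧ r * a.num - s * a.den = 1 := by
    have hcop : IsCoprime a.num (a.den : ℤ) := a.isCoprime_num_den
    obtain ⟨x, y, hxy⟩ := hcop
    have hd : (0 : ℤ) < a.den := by exact_mod_cast a.pos
    refine ⟨x % a.den, -y - (x / a.den) * a.num, Int.emod_nonneg _ hd.ne',
      Int.emod_lt_of_pos _ hd, ?_⟩
    have := Int.emod_add_mul_ediv x a.den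
    linear_combination hxy + a.num * this
  have hr0' : (0 : ℝ) ≤ r := by exact_mod_cast hr0
  have hrq' : (r : ℝ) ≤ q := by
    have : (r : ℝ) ≤ ((a.den : ℤ) : ℝ) := by exact_mod_cast hrq.le
    simpa [hq] using this
  have hdet' : (r : ℝ) * a.num - s * q = 1 := by
    have : ((r * a.num - s * a.den : ℤ) : ℝ) = 1 := by rw [hdet]; simp
    push_cast at this
    exact this
  set f : ℝ := r * ξ - s with hf
  have hdet2 : q * f - r * e = 1 := by rw [hf, he]; linear_combination hdet'
  have heq : |e| ≤ 1 / q := heT.trans (one_div_le_one_div_of_le hq0 hqT)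
  have hfq : |f| ≤ 2 / q := by
    have h1 : q * |f| ≤ 2 := by
      have : q * f = 1 + r * e := by linarith
      rw [← abs_of_pos hq0, ← abs_mul, this]
      calc |1 + r * e| ≤ |(1 : ℝ)| + |r * e| := abs_add_le _ _
        _ = 1 + r * |e| := by rw [abs_one, abs_mul, abs_of_nonneg hr0']
        _ ≤ 1 + q * (1 / q) := by gcongr
        _ = 2 := by rw [mul_one_div_cancel hq0.ne']; norm_num
    rw [le_div_iff₀ hq0]; linarith
  -- Coordinates of `(X, Y)` in the basis, by Cramer's rule.
  set A : ℝ := f * X - r * Y with hA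
  set B : ℝ := q * Y - e * X with hB
  have hX : X = A * q + B * r := by rw [hA, hB]; linear_combination (-X) * hdet2
  have hY : Y = A * e + B * f := by rw [hA, hB]; linear_combination (-Y) * hdet2
  have hfr : ∀ z : ℝ, |(⌊z⌋ : ℝ) - z| ≤ 1 := fun z => by
    rw [abs_le]; constructor <;> linarith [Int.floor_le z, Int.lt_floor_add_one z]
  have hcomb : ∀ x y : ℝ, |(⌊A⌋ - A) * x + (⌊B⌋ - B) * y| ≤ |x| + |y| := fun x y => by
    refine (abs_add_le _ _).trans ?_
    rw [abs_mul, abs_mul]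
    have h1 := mul_le_mul_of_nonneg_right (hfr A) (abs_nonneg x)
    have h2 := mul_le_mul_of_nonneg_right (hfr B) (abs_nonneg y)
    linarith
  refine ⟨⌊A⌋ * a.den + ⌊B⌋ * r, ⌊A⌋ * a.num + ⌊B⌋ * s, ?_, ?_⟩
  · have h1 := hcomb q r
    rw [abs_of_pos hq0, abs_of_nonneg hr0'] at h1
    have h2 : (((⌊A⌋ * a.den + ⌊B⌋ * r : ℤ) : ℝ) - X) = (⌊A⌋ - A) * q + (⌊B⌋ - B) * r := by
      push_cast; rw [← hq]; linear_combination -hX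
    rw [h2]; linarith
  · have h1 := hcomb e f
    have h2 : (((⌊A⌋ * a.den + ⌊B⌋ * r : ℤ) : ℝ) * ξ - ((⌊A⌋ * a.num + ⌊B⌋ * s : ℤ) : ℝ) - Y)
        = (⌊A⌋ - A) * e + (⌊B⌋ - B) * f := by
      push_cast; rw [← hq]; linear_combination -hY
    rw [h2]
    have h3 : 2 / q = 2 * (1 / q) := by ring
    linarith

theorem tendsto_ratio_and_root (a : ℝ) (ha : 0 < a) (f : ℕ → ℝ)
    (hf : Tendsto (fun n => f n / a ^ n) atTop (𝓝 1)) :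
    Tendsto (fun n => f (n + 1) / f n) atTop (𝓝 a) ∧
      Tendsto (fun n => |f n| ^ (1 / (n : ℝ))) atTop (𝓝 a) := by
  constructor
  · have h1 := (((tendsto_add_atTop_iff_nat 1).mpr hf).div hf one_ne_zero).mul_const a
    simp only [div_one, one_mul] at h1
    refine h1.congr fun n => ?_
    simp only [Pi.div_apply]
    have : a ^ n ≠ 0 := by positivity
    rw [pow_succ]
    field_simp
  · have h0 : Tendsto (fun n : ℕ => 1 / (n : ℝ)) atTop (𝓝 0) :=
      tendsto_const_div_atTop_nhds_zero_nat 1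
    have h1 := (hf.abs.rpow h0 (by simp)).mul_const a
    simp only [Real.rpow_zero, one_mul] at h1
    refine h1.congr' ?_
    filter_upwards [eventually_gt_atTop 0] with n hn
    have hn' : (n : ℝ) ≠ 0 := by exact_mod_cast hn.ne'
    have hp : 0 < a ^ n := by positivity
    rw [abs_div, abs_of_pos hp, Real.div_rpow (abs_nonneg _) hp.le, ← Real.rpow_natCast,
      ← Real.rpow_mul ha.le, mul_one_div_cancel hn', Real.rpow_one, div_mul_cancel₀ _ ha.ne']

theorem tendsto_div_pow_one (a d C : ℝ) (ha : 0 < a) (hd : 0 < d) (hda : d < a) (f : ℕ → ℝ)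
    (hf : ∀ n, |f n - a ^ n| ≤ C * d ^ n) :
    Tendsto (fun n => f n / a ^ n) atTop (𝓝 1) := by
  rw [tendsto_iff_dist_tendsto_zero]
  have h1 := (tendsto_pow_atTop_nhds_zero_of_lt_one (div_pos hd ha).le
    ((div_lt_one ha).mpr hda)).const_mul C
  rw [mul_zero] at h1
  refine squeeze_zero (fun _ => dist_nonneg) (fun n => ?_) h1
  have hp : 0 < a ^ n := by positivity
  rw [Real.dist_eq, div_sub_one hp.ne', abs_div, abs_of_pos hp, div_pow, ← mul_div_assoc]
  gcongr
  exact hf n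

theorem exists_sequences_geometric_ratios (ξ : ℝ) (hξ : Irrational ξ)
    (α β : ℝ) (hα0 : 0 < α) (hα1 : α < 1) (hβ : 1 < β)
    (hμ : irrationalityExponent ξ < ((1 - Real.log β / Real.log α : ℝ) : EReal)) :
    ∃ u v : ℕ → ℤ,
      Tendsto (fun n =>
        |(u (n + 1) : ℝ) * ξ - (v (n + 1) : ℝ)| / |(u n : ℝ) * ξ - (v n : ℝ)|) atTop (𝓝 α) ∧
      Tendsto (fun n => |(u n : ℝ) * ξ - (v n : ℝ)| ^ (1 / (n : ℝ))) atTop (𝓝 α) ∧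
      Tendsto (fun n => (u (n + 1) : ℝ) / (u n : ℝ)) atTop (𝓝 β) ∧
      Tendsto (fun n => |(u n : ℝ)| ^ (1 / (n : ℝ))) atTop (𝓝 β) := by
  have hla : Real.log α < 0 := Real.log_neg hα0 hα1
  have hlb : 0 < Real.log β := Real.log_pos hβ
  have hν : 0 < -(Real.log β / Real.log α) := neg_pos.mpr (div_neg_of_pos_of_neg hlb hla)
  obtain ⟨κ, c, hκ0, hκν, hc0, hlow⟩ :=
    exists_lower_bound ξ hξ (-(Real.log β / Real.log α)) hν (by rwa [← sub_eq_add_neg])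
  have hαβ : α ^ (-κ) < β := by
    rw [← Real.log_lt_log_iff (by positivity) (by linarith), Real.log_rpow hα0]
    rw [← neg_div, lt_div_iff_of_neg hla] at hκν
    linarith
  obtain ⟨γ, hγ1, hγβ⟩ := exists_between hαβ
  have hγ : 1 < γ := (Real.one_lt_rpow_of_pos_of_lt_one_of_neg hα0 hα1 (by linarith)).trans hγ1
  have hγ0 : 0 < γ := by linarith
  have hδα : γ ^ (-(1 / κ)) < α := by
    calc γ ^ (-(1 / κ)) < (α ^ (-κ)) ^ (-(1 / κ)) :=
          Real.rpow_lt_rpow_of_neg (by positivity) hγ1 (by simpa using hκ0)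
      _ = α := by
          rw [← Real.rpow_mul hα0.le, neg_mul_neg, mul_one_div_cancel hκ0.ne', Real.rpow_one]
  choose u v hu hv using fun n : ℕ =>
    exists_lattice_point ξ κ c hκ0 hc0 hlow (γ ^ n) (β ^ n) (α ^ n) (one_le_pow₀ hγ.le)
  have hU := tendsto_ratio_and_root β (by linarith) (fun n => (u n : ℝ))
    (tendsto_div_pow_one β γ 2 (by linarith) hγ0 hγβ _ hu)
  have hV := tendsto_ratio_and_root α hα0 (fun n => (u n : ℝ) * ξ - v n)
    (tendsto_div_pow_one α (γ ^ (-(1 / κ))) (3 * c ^ (-(1 / κ))) hα0 (by positivity) hδα _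
      fun n => (hv n).trans_eq (by
        rw [Real.mul_rpow hc0.le (by positivity), ← Real.rpow_natCast, ← Real.rpow_natCast,
          ← Real.rpow_mul hγ0.le, ← Real.rpow_mul hγ0.le, mul_comm (n : ℝ), mul_assoc]))
  refine ⟨u, v, ?_, hV.2, hU.1, hU.2⟩
  simpa only [abs_div, abs_of_pos hα0] using hV.1.abs
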